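/- arXiv:2007.02059 — 4 statements merged into one kernel-verified Lean document; each statement's English description precedes it below -/
import Mathlib

section
/- For all integers k ≥ 2 and 1 ≤ s ≤ k, one has f(k, s−1) + f(k−1, s−1) ≤ f(k, s). -/
/-- The function `f(k,s)` from the paper (for `1 ≤ k` and `s ≤ k`). -/
def f (k s : ℕ) : ℕ :=
  if Even s ∧ Even (k - s) then 17 ^ (s / 2) * 5 ^ ((k - s) / 2)
  else if Even s then 2 * 17 ^ (s / 2) * 5 ^ ((k - s - 1) / 2)
  else if s = k then 4 * 17 ^ ((k - 1) / 2)
  else if Odd (k - s) then 8 * 17 ^ ((s - 1) / 2) * 5 ^ ((k - s - 1) / 2)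
  else 16 * 17 ^ ((s - 1) / 2) * 5 ^ ((k - s - 2) / 2)

/-! Raising `k` and `s` by 2 multiplies `f k s` by 17, and raising `k` alone by 2 multiplies it by 5
when `s < k`. Both operations therefore preserve the inequality, which reduces it to the six cases
with `s - 1 ≤ 1` and `k - s ≤ 2`. -/

theorem f_add_two_add_two (k s : ℕ) : f (k + 2) (s + 2) = 17 * f k s := by
  have even_add_two : Even (s + 2) ↔ Even s := by simp [Nat.even_add]
  have half_add_two : (s + 2) / 2 = s / 2 + 1 := by lia
  have half_pred_add_two {n : ℕ} (hn : 0 < n) : (n + 2 - 1) / 2 = (n - 1) / 2 + 1 := by lia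
  have pos_of_not_even (hs : ¬Even s) : 0 < s := (Nat.not_even_iff_odd.mp hs).pos
  simp only [f, even_add_two, Nat.add_sub_add_right, Nat.add_right_cancel_iff]
  split_ifs with _ hs hsk
  · rw [half_add_two]
    ring
  · rw [half_add_two]
    ring
  · rw [half_pred_add_two (hsk ▸ pos_of_not_even hs)]
    ring
  · rw [half_pred_add_two (pos_of_not_even hs)]
    ring
  · rw [half_pred_add_two (pos_of_not_even hs)]
    ring

theorem f_add_two_left {k s : ℕ} (h : s < k) : f (k + 2) s = 5 * f k s := by
  have even_diff : Even (k + 2 - s) ↔ Even (k - s) := by grind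
  have odd_diff : Odd (k + 2 - s) ↔ Odd (k - s) := by grind
  simp only [f, even_diff, odd_diff, h.ne, show s ≠ k + 2 by lia, if_false]
  split_ifs
  · rw [show (k + 2 - s) / 2 = (k - s) / 2 + 1 by lia]
    ring
  · rw [show (k + 2 - s - 1) / 2 = (k - s - 1) / 2 + 1 by lia]
    ring
  · rw [show (k + 2 - s - 1) / 2 = (k - s - 1) / 2 + 1 by lia]
    ring
  · rw [show (k + 2 - s - 2) / 2 = (k - s - 2) / 2 + 1 by grind]
    ring

theorem f_succ_add_f_le (s d : ℕ) :
    f (s + d + 1) s + f (s + d) s ≤ f (s + d + 1) (s + 1) := by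
  match s, d with
  | s, d + 3 =>
    have ih := f_succ_add_f_le s (d + 1)
    calc f (s + (d + 1) + 1 + 2) s + f (s + (d + 1) + 2) s
        = 5 * (f (s + (d + 1) + 1) s + f (s + (d + 1)) s) := by
          rw [f_add_two_left (by lia), f_add_two_left (by lia), mul_add]
      _ ≤ 5 * f (s + (d + 1) + 1) (s + 1) := Nat.mul_le_mul_left 5 ih
      _ = f (s + (d + 1) + 1 + 2) (s + 1) := (f_add_two_left (by lia)).symm
  | s + 2, d =>
    have ih := f_succ_add_f_le s d
    rw [show s + 2 + d = s + d + 2 by ring]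
    calc f (s + d + 1 + 2) (s + 2) + f (s + d + 2) (s + 2)
        = 17 * (f (s + d + 1) s + f (s + d) s) := by
          rw [f_add_two_add_two, f_add_two_add_two, mul_add]
      _ ≤ 17 * f (s + d + 1) (s + 1) := Nat.mul_le_mul_left 17 ih
      _ = f (s + d + 1 + 2) (s + 1 + 2) := (f_add_two_add_two _ _).symm
  | 0, 0 | 0, 1 | 0, 2 | 1, 0 | 1, 1 | 1, 2 => decide

theorem f_ineq_five (k s : ℕ) (hk : 2 ≤ k) (hs1 : 1 ≤ s) (hs2 : s ≤ k) :
    f k (s - 1) + f (k - 1) (s - 1) ≤ f k s := by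
  obtain ⟨t, rfl⟩ := Nat.exists_eq_add_of_le' hs1
  obtain ⟨d, rfl⟩ := Nat.exists_eq_add_of_le hs2
  simpa [Nat.add_right_comm t 1 d] using f_succ_add_f_le t d
end

section
/- Let the edges of a finite complete graph be 2-colored with red and blue so that there is neither a red copy of K4^+ nor a blue copy of K4^+. Then every vertex has at most 8 red neighbors and at most 8 blue neighbors. -/
/-- A symmetric edge-coloring function on the complete graph on `Fin n`. -/
def IsSym {n : ℕ} {α : Type*} (c : Fin n → Fin n → α) : Prop :=
  ∀ u v : Fin n, c u v = c v u

/-- A Gallai coloring: no triangle whose three edges get three distinct colors. -/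
def NoRainbowTriangle {n : ℕ} {α : Type*} (c : Fin n → Fin n → α) : Prop :=
  ∀ u v w : Fin n, u ≠ v → u ≠ w → v ≠ w →
    c u v = c u w ∨ c u v = c v w ∨ c u w = c v w

/-- There is a monochromatic triangle in color `i`. -/
def HasMonoK3 {n : ℕ} {α : Type*} (c : Fin n → Fin n → α) (i : α) : Prop :=
  ∃ a b d : Fin n, a ≠ b ∧ a ≠ d ∧ b ≠ d ∧
    c a b = i ∧ c a d = i ∧ c b d = i

/-- There is a monochromatic copy of `K₄⁺ = K₁ ∨ (K₃ + K₁)` in color `i`: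
a vertex `x` joined to all of `a, b, d, e`, where `a b d` is a triangle
(equivalently `K₄` on `{x,a,b,d}` together with a pendant edge `x e`). -/
def HasMonoK4plus {n : ℕ} {α : Type*} (c : Fin n → Fin n → α) (i : α) : Prop :=
  ∃ x a b d e : Fin n,
    x ≠ a ∧ x ≠ b ∧ x ≠ d ∧ x ≠ e ∧ a ≠ b ∧ a ≠ d ∧ a ≠ e ∧ b ≠ d ∧ b ≠ e ∧ d ≠ e ∧
    c x a = i ∧ c x b = i ∧ c x d = i ∧ c x e = i ∧
    c a b = i ∧ c a d = i ∧ c b d = i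

/-!
If the red neighborhood of a vertex had nine vertices, it would contain no red triangle, so by
`R(3, 4) ≤ 9` it would contain a blue `K₄`. No blue edge leaves this `K₄`, so the remaining five
vertices are red neighbors of each of its vertices; having no red edge among themselves, they span
a blue `K₅`, which contains `K₄⁺`.
-/

section Graphs

open Finset

variable {V : Type*} {G : SimpleGraph V}

/-- The Ramsey bound `R(k, l) ≤ N + 1`, in the form: in every graph on `V`, a set of vertices
containing neither a `k`-clique nor an `l`-clique of the complement has at most `N` elements.
Bounding `R(k, l) - 1` rather than `R(k, l)` keeps subtraction out of the recursions. -/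
def RamseyBound (V : Type*) (N k l : ℕ) : Prop :=
  ∀ (G : SimpleGraph V) (A : Finset V), G.CliqueFreeOn A k → Gᶜ.CliqueFreeOn A l → #A ≤ N

namespace RamseyBound

variable {N k l : ℕ}

protected theorem symm (h : RamseyBound V N k l) : RamseyBound V N l k := fun G A hG hGc =>
  h Gᶜ A hGc (by rwa [compl_compl])

theorem two_left (l : ℕ) : RamseyBound V l 2 (l + 1) := by
  intro G A hG hGc
  by_contra! h
  obtain ⟨s, hsA, hs⟩ := exists_subset_card_eq (Nat.succ_le_of_lt h)
  refine hGc (coe_subset.2 hsA) ⟨fun x hx y hy hxy => ?_, hs⟩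
  exact (G.compl_adj x y).2 ⟨hxy, G.cliqueFreeOn_two.1 hG (hsA hx) (hsA hy) hxy⟩

theorem card_filter_adj_le [DecidableRel G.Adj] (h : RamseyBound V N k l) {A : Finset V} {v : V}
    (hv : v ∈ A) (hG : G.CliqueFreeOn A (k + 1)) (hGc : Gᶜ.CliqueFreeOn A l) :
    #{u ∈ A | G.Adj v u} ≤ N := by
  refine h G _ ?_ (hGc.subset _ (coe_subset.2 (filter_subset _ A)))
  convert! hG.of_succ G (mem_coe.2 hv)
  exact coe_filter _ _

end RamseyBound

theorem card_filter_adj_add_card_filter_compl_adj [DecidableEq V] [DecidableRel G.Adj]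
    {A : Finset V} {v : V} (hv : v ∈ A) :
    #{u ∈ A | G.Adj v u} + #{u ∈ A | Gᶜ.Adj v u} + 1 = #A := by
  have hadj : {u ∈ A.erase v | G.Adj v u} = {u ∈ A | G.Adj v u} := by
    ext u
    simp only [mem_filter, mem_erase]
    exact ⟨fun h => ⟨h.1.2, h.2⟩, fun h => ⟨⟨h.2.ne', h.1⟩, h.2⟩⟩
  have hcompl : {u ∈ A.erase v | ¬ G.Adj v u} = {u ∈ A | Gᶜ.Adj v u} := by
    ext u
    simp only [mem_filter, mem_erase, SimpleGraph.compl_adj, ne_comm (a := v)]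
    tauto
  rw [← hadj, ← hcompl, card_filter_add_card_filter_not, card_erase_add_one hv]

theorem even_card_of_forall_odd_card_filter_adj [DecidableRel G.Adj] {A : Finset V}
    (h : ∀ v ∈ A, Odd #{u ∈ A | G.Adj v u}) : Even #A := by
  classical
  have hdeg (v : A) : (G.induce (A : Set V)).degree v = #{u ∈ A | G.Adj v u} := by
    rw [← SimpleGraph.card_neighborFinset_eq_degree, ← card_map (.subtype (· ∈ A))]
    congr 1
    ext u
    simp [and_comm]
  have hodd (v : A) : Odd ((G.induce (A : Set V)).degree v) := hdeg v ▸ h v v.2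
  simpa [hodd] using (G.induce (A : Set V)).even_card_odd_degree_vertices

namespace RamseyBound

variable {a b k l : ℕ}

protected theorem add (h₁ : RamseyBound V a k (l + 1)) (h₂ : RamseyBound V b (k + 1) l) :
    RamseyBound V (a + b + 1) (k + 1) (l + 1) := by
  classical
  intro G A hG hGc
  obtain rfl | ⟨v, hv⟩ := A.eq_empty_or_nonempty
  · simp
  have hsum := card_filter_adj_add_card_filter_compl_adj (G := G) hv
  have hadj := h₁.card_filter_adj_le hv hG hGc
  have hcompl := h₂.symm.card_filter_adj_le hv hGc (by rwa [compl_compl])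
  lia

theorem add_of_odd (ha : Odd a) (hb : Odd b) (h₁ : RamseyBound V a k (l + 1))
    (h₂ : RamseyBound V b (k + 1) l) : RamseyBound V (a + b) (k + 1) (l + 1) := by
  classical
  intro G A hG hGc
  by_contra! hA
  have hcard : #A = a + b + 1 := le_antisymm (h₁.add h₂ G A hG hGc) hA
  have hregular : ∀ v ∈ A, #{u ∈ A | G.Adj v u} = a := fun v hv => by
    have hsum := card_filter_adj_add_card_filter_compl_adj (G := G) hv
    have hadj := h₁.card_filter_adj_le hv hG hGc
    have hcompl := h₂.symm.card_filter_adj_le hv hGc (by rwa [compl_compl])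
    lia
  have heven : Even #A :=
    even_card_of_forall_odd_card_filter_adj (G := G) fun v hv => (hregular v hv).symm ▸ ha
  exact Nat.not_even_iff_odd.2 (hcard ▸ (ha.add_odd hb).add_one) heven

theorem three_three : RamseyBound V 5 3 3 :=
  (two_left 2).add (two_left 2).symm

theorem three_four : RamseyBound V 8 3 4 :=
  (two_left 3).add_of_odd (by decide) (by decide) three_three

end RamseyBound

/-- `G` contains no copy of `K₄⁺`. A pendant edge at a 4-clique is an edge leaving it, so this says
that no edge of `G` leaves a 4-clique. -/
def K4PlusFree (G : SimpleGraph V) : Prop :=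
  ∀ ⦃s : Finset V⦄, G.IsNClique 4 s → ∀ ⦃x y : V⦄, x ∈ s → G.Adj x y → y ∈ s

namespace K4PlusFree

theorem cliqueFree_five (hG : K4PlusFree G) : G.CliqueFree 5 := by
  classical
  intro s hs
  obtain ⟨x, hx⟩ : s.Nonempty := card_pos.1 (by rw [hs.card_eq]; decide)
  have herase : G.IsNClique 4 (s.erase x) := hs.erase_of_mem hx
  obtain ⟨y, hy⟩ : (s.erase x).Nonempty := card_pos.1 (by rw [herase.card_eq]; decide)
  have hyx : G.Adj y x := hs.isClique (mem_of_mem_erase hy) hx (ne_of_mem_erase hy)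
  exact notMem_erase x s (hG herase hy hyx)

theorem cliqueFreeOn_three (hG : K4PlusFree G) {v : V} {A : Finset V}
    (hA : (A : Set V) ⊆ G.neighborSet v) (hcard : 3 < #A) : G.CliqueFreeOn A 3 := by
  classical
  intro s hsA hs
  have hclique : G.IsNClique 4 (insert v s) := hs.insert fun u hu => hA (hsA hu)
  have hAs : A ⊆ s := fun u hu =>
    have hvu : G.Adj v u := hA hu
    mem_of_mem_insert_of_ne (hG hclique (mem_insert_self v s) hvu) hvu.ne'
  exact (hcard.trans_le (card_le_card hAs)).ne hs.card_eq.symm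

theorem card_le_eight_of_subset_neighborSet (hG : K4PlusFree G) (hGc : K4PlusFree Gᶜ) {v : V}
    {A : Finset V} (hA : (A : Set V) ⊆ G.neighborSet v) : #A ≤ 8 := by
  classical
  by_contra! hcard
  have htriangle : G.CliqueFreeOn A 3 := hG.cliqueFreeOn_three hA (by lia)
  obtain ⟨K, hKA, hK⟩ : ∃ K : Finset V, (K : Set V) ⊆ A ∧ Gᶜ.IsNClique 4 K := by
    by_contra! hK
    exact hcard.not_ge (RamseyBound.three_four G A htriangle hK)
  obtain ⟨x, hx⟩ : K.Nonempty := card_pos.1 (by rw [hK.card_eq]; decide)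
  have hadj : ((A \ K : Finset V) : Set V) ⊆ A ∩ G.neighborSet x := fun y hy => by
    obtain ⟨hyA, hyK⟩ := mem_sdiff.1 hy
    refine ⟨hyA, of_not_not fun hxy => hyK (hGc hK hx ?_)⟩
    exact (G.compl_adj x y).2 ⟨fun h => hyK (h ▸ hx), hxy⟩
  have hrest : #(A \ K) ≤ 4 :=
    RamseyBound.two_left 4 G (A \ K) ((htriangle.of_succ G (hKA hx)).subset G hadj)
      hGc.cliqueFree_five.cliqueFreeOn
  rw [card_sdiff_of_subset (coe_subset.1 hKA), hK.card_eq] at hrest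
  lia

theorem encard_neighborSet_le_eight (hG : K4PlusFree G) (hGc : K4PlusFree Gᶜ) (v : V) :
    (G.neighborSet v).encard ≤ 8 := by
  by_contra! h
  obtain ⟨s, hs, hcard⟩ := Set.exists_subset_encard_eq (Order.add_one_le_of_lt h)
  lift s to Finset V using Set.finite_of_encard_eq_coe (k := 9) hcard
  have hs_card : #s = 9 := by
    rw [Set.encard_coe_eq_coe_finsetCard] at hcard
    exact_mod_cast hcard
  have hs_le : #s ≤ 8 := hG.card_le_eight_of_subset_neighborSet hGc hs
  lia

end K4PlusFree

end Graphs

section Colorings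

variable {n : ℕ} {α : Type*} {c : Fin n → Fin n → α}

/-- The graph formed by the edges of color `i`; the values of `c` on the diagonal are ignored. -/
def colorGraph (hsym : IsSym c) (i : α) : SimpleGraph (Fin n) where
  Adj u v := u ≠ v ∧ c u v = i
  symm := ⟨fun u v h => ⟨h.1.symm, hsym v u ▸ h.2⟩⟩
  loopless := ⟨fun _ h => h.1 rfl⟩

theorem k4PlusFree_colorGraph (hsym : IsSym c) {i : α} (h : ¬ HasMonoK4plus c i) :
    K4PlusFree (colorGraph hsym i) := by
  classical
  intro s hs x e hx hxe
  by_contra he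
  obtain ⟨a, b, d, hab, had, hbd, hsx⟩ := SimpleGraph.is3Clique_iff.1 (hs.erase_of_mem hx)
  have hmem : ∀ u ∈ ({a, b, d} : Finset (Fin n)), (colorGraph hsym i).Adj x u ∧ u ≠ e := by
    intro u hu
    obtain ⟨hux, hus⟩ := Finset.mem_erase.1 (hsx ▸ hu)
    exact ⟨hs.isClique hx hus hux.symm, ne_of_mem_of_not_mem hus he⟩
  obtain ⟨hxa, hae⟩ := hmem a (by simp)
  obtain ⟨hxb, hbe⟩ := hmem b (by simp)
  obtain ⟨hxd, hde⟩ := hmem d (by simp)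
  exact h ⟨x, a, b, d, e, hxa.1, hxb.1, hxd.1, hxe.1, hab.1, had.1, hae, hbd.1, hbe, hde,
    hxa.2, hxb.2, hxd.2, hxe.2, hab.2, had.2, hbd.2⟩

theorem compl_colorGraph {c : Fin n → Fin n → Bool} (hsym : IsSym c) (i : Bool) :
    (colorGraph hsym i)ᶜ = colorGraph hsym !i := by
  ext u v
  simp only [SimpleGraph.compl_adj, colorGraph, Bool.eq_not]
  tauto

theorem encard_neighborSet_colorGraph [DecidableEq α] (hsym : IsSym c) (i : α) (v : Fin n) :
    ((colorGraph hsym i).neighborSet v).encard =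
      (Finset.univ.filter fun u : Fin n => u ≠ v ∧ c v u = i).card := by
  rw [← Set.encard_coe_eq_coe_finsetCard]
  congr 1
  ext u
  simp [colorGraph, ne_comm]

end Colorings

theorem red_blue_degree_bound_general {V : Type*} (G : SimpleGraph V) (hred : K4PlusFree G)
    (hblue : K4PlusFree Gᶜ) :
    ∀ v : V, (G.neighborSet v).encard ≤ 8 ∧ (Gᶜ.neighborSet v).encard ≤ 8 := fun v =>
  ⟨hred.encard_neighborSet_le_eight hblue v,
    hblue.encard_neighborSet_le_eight (by rwa [compl_compl]) v⟩

theorem red_blue_degree_bound {n : ℕ} (c : Fin n → Fin n → Bool) (hsym : IsSym c)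
    (hred : ¬ HasMonoK4plus c true) (hblue : ¬ HasMonoK4plus c false) :
    ∀ v : Fin n,
      (Finset.univ.filter fun u : Fin n => u ≠ v ∧ c v u = true).card ≤ 8 ∧
      (Finset.univ.filter fun u : Fin n => u ≠ v ∧ c v u = false).card ≤ 8 := fun v => by
  simpa only [compl_colorGraph, Bool.not_true, encard_neighborSet_colorGraph, Nat.cast_le_ofNat]
    using red_blue_degree_bound_general (colorGraph hsym true) (k4PlusFree_colorGraph hsym hred)
      (compl_colorGraph hsym true ▸ k4PlusFree_colorGraph hsym hblue) v
end

section
/- Let k ≥ 1, 0 ≤ s ≤ k, and n ≥ 1 be integers. Suppose there exists a Gallai coloring of the complete graph on n vertices with colors from {1,...,k} containing no monochromatic copy of K4^+ in any color i ∈ {1,...,s} and no monochromatic copy of K3 in any color i ∈ {s+1,...,k}. Then there exists a Gallai coloring of the complete graph on 17n vertices with colors from {1,...,k+2} containing no monochromatic copy of K4^+ in any color i ∈ {1,...,s} ∪ {k+1, k+2} and no monochromatic copy of K3 in any color i ∈ {s+1,...,k}. -/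
/-- A monochromatic `K₄` in color `i`, encoded in the style of `HasMonoK3` and `HasMonoK4plus`: the
part of a monochromatic `K₄⁺` that survives projection to the blocks of a blow-up. -/
def HasMonoK4 {n : ℕ} {α : Type*} (c : Fin n → Fin n → α) (i : α) : Prop :=
  ∃ x a b d : Fin n, x ≠ a ∧ x ≠ b ∧ x ≠ d ∧ a ≠ b ∧ a ≠ d ∧ b ≠ d ∧
    c x a = i ∧ c x b = i ∧ c x d = i ∧ c a b = i ∧ c a d = i ∧ c b d = i

theorem HasMonoK4plus.hasMonoK4 {n : ℕ} {α : Type*} {c : Fin n → Fin n → α} {i : α}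
    (h : HasMonoK4plus c i) : HasMonoK4 c i := by
  obtain ⟨x, a, b, d, -, hxa, hxb, hxd, -, hab, had, -, hbd, -, -, cxa, cxb, cxd, -, h⟩ := h
  exact ⟨x, a, b, d, hxa, hxb, hxd, hab, had, hbd, cxa, cxb, cxd, h⟩

theorem NoRainbowTriangle.of_two_colors {n : ℕ} {α : Type*} {c : Fin n → Fin n → α} {i j : α}
    (h : ∀ u v, u ≠ v → c u v = i ∨ c u v = j) : NoRainbowTriangle c := by
  intro u v w huv huw hvw
  have := h u v huv
  have := h u w huw
  have := h v w hvw
  grind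

section BlowUp

variable {m n : ℕ} {α : Type*} {b : Fin m → Fin m → α} {c : Fin n → Fin n → α} {i : α}
  {u v : Fin (m * n)}

/-- The blow-up of the coloring `b` on the coloring `c`: each vertex of `b` is replaced by a copy of
`c`. The vertex `u` is vertex `u.modNat` of the copy of `c` that replaces the vertex `u.divNat`. -/
def blowUp (b : Fin m → Fin m → α) (c : Fin n → Fin n → α) (u v : Fin (m * n)) : α :=
  if u.divNat = v.divNat then c u.modNat v.modNat else b u.divNat v.divNat

theorem blowUp_of_divNat_eq (h : u.divNat = v.divNat) : blowUp b c u v = c u.modNat v.modNat :=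
  if_pos h

theorem blowUp_of_divNat_ne (h : u.divNat ≠ v.divNat) : blowUp b c u v = b u.divNat v.divNat :=
  if_neg h

theorem modNat_ne_of_divNat_eq (huv : u ≠ v) (h : u.divNat = v.divNat) : u.modNat ≠ v.modNat :=
  fun h' ↦ huv (finProdFinEquiv.symm.injective (Prod.ext h h'))

theorem IsSym.blowUp (hb : IsSym b) (hc : IsSym c) : IsSym (blowUp b c) := by
  intro u v
  simp only [_root_.blowUp, hb u.divNat, hc u.modNat, eq_comm]

theorem blowUp_induction (P : α → Prop) (hb : ∀ u v, u ≠ v → P (b u v))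
    (hc : ∀ u v, u ≠ v → P (c u v)) (huv : u ≠ v) : P (blowUp b c u v) := by
  by_cases h : u.divNat = v.divNat
  · rw [blowUp_of_divNat_eq h]
    exact hc _ _ (modNat_ne_of_divNat_eq huv h)
  · rw [blowUp_of_divNat_ne h]
    exact hb _ _ h

theorem NoRainbowTriangle.blowUp (hsym : IsSym b) (hb : NoRainbowTriangle b)
    (hc : NoRainbowTriangle c) : NoRainbowTriangle (blowUp b c) := by
  intro u v w huv huw hvw
  by_cases h₁ : u.divNat = v.divNat <;> by_cases h₂ : u.divNat = w.divNat
  · have h₃ : v.divNat = w.divNat := h₁.symm.trans h₂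
    rw [blowUp_of_divNat_eq h₁, blowUp_of_divNat_eq h₂, blowUp_of_divNat_eq h₃]
    exact hc _ _ _ (modNat_ne_of_divNat_eq huv h₁) (modNat_ne_of_divNat_eq huw h₂)
      (modNat_ne_of_divNat_eq hvw h₃)
  · right; right
    rw [blowUp_of_divNat_ne h₂, blowUp_of_divNat_ne (h₁ ▸ h₂), h₁]
  · right; left
    rw [blowUp_of_divNat_ne h₁, blowUp_of_divNat_ne (h₂ ▸ Ne.symm h₁), hsym, h₂]
  · by_cases h₃ : v.divNat = w.divNat
    · left
      rw [blowUp_of_divNat_ne h₁, blowUp_of_divNat_ne h₂, h₃]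
    · rw [blowUp_of_divNat_ne h₁, blowUp_of_divNat_ne h₂, blowUp_of_divNat_ne h₃]
      exact hb _ _ _ h₁ h₂ h₃

theorem blowUp_eq_iff_of_left_ne (hb : ∀ u v, u ≠ v → b u v ≠ i) :
    blowUp b c u v = i ↔ u.divNat = v.divNat ∧ c u.modNat v.modNat = i := by
  by_cases h : u.divNat = v.divNat
  · simp only [blowUp_of_divNat_eq h, h, true_and]
  · simp only [blowUp_of_divNat_ne h, h, hb _ _ h, false_and]

theorem blowUp_eq_iff_of_right_ne (hc : ∀ u v, u ≠ v → c u v ≠ i) (huv : u ≠ v) :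
    blowUp b c u v = i ↔ u.divNat ≠ v.divNat ∧ b u.divNat v.divNat = i := by
  by_cases h : u.divNat = v.divNat
  · simp only [blowUp_of_divNat_eq h, hc _ _ (modNat_ne_of_divNat_eq huv h), h, ne_eq,
      not_true_eq_false, false_and]
  · simp only [blowUp_of_divNat_ne h, ne_eq, h, not_false_eq_true, true_and]

theorem HasMonoK3.of_blowUp (hb : ∀ u v, u ≠ v → b u v ≠ i) (h : HasMonoK3 (blowUp b c) i) :
    HasMonoK3 c i := by
  obtain ⟨p, q, r, hpq, hpr, hqr, h⟩ := h
  simp only [blowUp_eq_iff_of_left_ne hb] at h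
  obtain ⟨⟨dpq, cpq⟩, ⟨dpr, cpr⟩, dqr, cqr⟩ := h
  exact ⟨p.modNat, q.modNat, r.modNat, modNat_ne_of_divNat_eq hpq dpq,
    modNat_ne_of_divNat_eq hpr dpr, modNat_ne_of_divNat_eq hqr dqr, cpq, cpr, cqr⟩

theorem HasMonoK4plus.of_blowUp (hb : ∀ u v, u ≠ v → b u v ≠ i)
    (h : HasMonoK4plus (blowUp b c) i) : HasMonoK4plus c i := by
  obtain ⟨x, p, q, r, e, hxp, hxq, hxr, hxe, hpq, hpr, hpe, hqr, hqe, hre, h⟩ := h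
  simp only [blowUp_eq_iff_of_left_ne hb] at h
  obtain ⟨⟨dxp, cxp⟩, ⟨dxq, cxq⟩, ⟨dxr, cxr⟩, ⟨dxe, cxe⟩, ⟨dpq, cpq⟩, ⟨dpr, cpr⟩, dqr, cqr⟩ := h
  exact ⟨x.modNat, p.modNat, q.modNat, r.modNat, e.modNat,
    modNat_ne_of_divNat_eq hxp dxp, modNat_ne_of_divNat_eq hxq dxq,
    modNat_ne_of_divNat_eq hxr dxr, modNat_ne_of_divNat_eq hxe dxe,
    modNat_ne_of_divNat_eq hpq dpq, modNat_ne_of_divNat_eq hpr dpr,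
    modNat_ne_of_divNat_eq hpe (dxp.symm.trans dxe), modNat_ne_of_divNat_eq hqr dqr,
    modNat_ne_of_divNat_eq hqe (dxq.symm.trans dxe),
    modNat_ne_of_divNat_eq hre (dxr.symm.trans dxe), cxp, cxq, cxr, cxe, cpq, cpr, cqr⟩

theorem HasMonoK4.of_blowUp (hc : ∀ u v, u ≠ v → c u v ≠ i) (h : HasMonoK4 (blowUp b c) i) :
    HasMonoK4 b i := by
  obtain ⟨x, p, q, r, hxp, hxq, hxr, hpq, hpr, hqr, cxp, cxq, cxr, cpq, cpr, cqr⟩ := h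
  rw [blowUp_eq_iff_of_right_ne hc ‹_›] at cxp cxq cxr cpq cpr cqr
  exact ⟨x.divNat, p.divNat, q.divNat, r.divNat, cxp.1, cxq.1, cxr.1, cpq.1, cpr.1, cqr.1,
    cxp.2, cxq.2, cxr.2, cpq.2, cpr.2, cqr.2⟩

end BlowUp

section Paley

variable {q : ℕ} {F α : Type*} {i j : α}

open scoped Classical in
/-- The Paley coloring of the complete graph whose vertices are identified with the elements of `F`
by `e`: color `i` where the difference is a square, color `j` elsewhere. For `F = ZMod 17` it colors
the edges between the blocks of the blow-up. If `-1` is a square in `F`, the color does not depend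
on the order in which the difference is taken. -/
noncomputable def paleyColoring [Ring F] (e : Fin q ≃ F) (i j : α) (u v : Fin q) : α :=
  if IsSquare (e u - e v) then i else j

theorem paleyColoring_eq_or_eq [Ring F] (e : Fin q ≃ F) (u v : Fin q) :
    paleyColoring e i j u v = i ∨ paleyColoring e i j u v = j := by
  classical exact ite_eq_or_eq _ i j

theorem paleyColoring_eq_paleyColoring_iff [Ring F] (e : Fin q ≃ F) (hij : i ≠ j)
    {u v u' v' : Fin q} :
    paleyColoring e i j u v = paleyColoring e i j u' v' ↔
      (IsSquare (e u - e v) ↔ IsSquare (e u' - e v')) := by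
  unfold paleyColoring
  split_ifs <;> simp_all [eq_comm]

theorem isSym_paleyColoring [CommRing F] (e : Fin q ≃ F) (h : IsSquare (-1 : F)) :
    IsSym (paleyColoring e i j) := by
  have isSquare_sub_comm {x y : F} (hxy : IsSquare (x - y)) : IsSquare (y - x) := by
    simpa only [neg_one_mul, neg_sub] using h.mul hxy
  intro u v
  classical exact if_congr ⟨isSquare_sub_comm, isSquare_sub_comm⟩ rfl rfl

theorem isSquare_div_of_isSquare_iff [Field F] [Finite F] {x y : F} (hx : x ≠ 0) (hy : y ≠ 0)
    (h : IsSquare x ↔ IsSquare y) : IsSquare (x / y) := by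
  classical
  have := Fintype.ofFinite F
  have hχ : quadraticChar F x = quadraticChar F y := by
    simp only [quadraticChar_apply, quadraticCharFun, hx, hy, h]
  rw [← quadraticChar_one_iff_isSquare (div_ne_zero hx hy), div_eq_mul_inv, map_mul, hχ, ← map_mul,
    mul_inv_cancel₀ hy, map_one]

theorem HasMonoK4.exists_isSquare_sub [Field F] {e : Fin q ≃ F} (hij : i ≠ j) {l : α}
    (h : HasMonoK4 (paleyColoring e i j) l) :
    ∃ y z : F, y ≠ 0 ∧ z ≠ 0 ∧ y ≠ 1 ∧ z ≠ 1 ∧ y ≠ z ∧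
      IsSquare y ∧ IsSquare z ∧ IsSquare (y - 1) ∧ IsSquare (z - 1) ∧ IsSquare (z - y) := by
  obtain ⟨x, a, b, d, hxa, hxb, hxd, hab, had, hbd, cxa, cxb, cxd, cab, cad, cbd⟩ := h
  have : Finite F := .of_equiv _ e
  have sub_ne {u v : Fin q} (huv : u ≠ v) : e u - e v ≠ 0 := sub_ne_zero.2 (e.injective.ne huv)
  have isSquare_div {u v : Fin q} (huv : u ≠ v) (hc : paleyColoring e i j u v = l) :
      IsSquare ((e u - e v) / (e x - e a)) :=
    isSquare_div_of_isSquare_iff (sub_ne huv) (sub_ne hxa)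
      ((paleyColoring_eq_paleyColoring_iff e hij).1 (hc.trans cxa.symm))
  -- The affine map `t ↦ (e x - t) / (e x - e a)` sends `x, a, b, d` to `0, 1, y, z`.
  let y := (e x - e b) / (e x - e a)
  let z := (e x - e d) / (e x - e a)
  have y_sub_one : y - 1 = (e a - e b) / (e x - e a) := by grind
  have z_sub_one : z - 1 = (e a - e d) / (e x - e a) := by grind
  have z_sub_y : z - y = (e b - e d) / (e x - e a) := by grind
  have div_ne {u v : Fin q} (huv : u ≠ v) : (e u - e v) / (e x - e a) ≠ 0 :=
    div_ne_zero (sub_ne huv) (sub_ne hxa)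
  exact ⟨y, z, div_ne hxb, div_ne hxd, sub_ne_zero.1 (y_sub_one ▸ div_ne hab),
    sub_ne_zero.1 (z_sub_one ▸ div_ne had), (sub_ne_zero.1 (z_sub_y ▸ div_ne hbd)).symm,
    isSquare_div hxb cxb, isSquare_div hxd cxd, y_sub_one ▸ isSquare_div hab cab,
    z_sub_one ▸ isSquare_div had cad, z_sub_y ▸ isSquare_div hbd cbd⟩

theorem not_hasMonoK4_paleyColoring_zmod_seventeen {e : Fin q ≃ ZMod 17} (hij : i ≠ j) {l : α} :
    ¬ HasMonoK4 (paleyColoring e i j) l := by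
  have no_square_differences : ¬ ∃ y z : ZMod 17, y ≠ 0 ∧ z ≠ 0 ∧ y ≠ 1 ∧ z ≠ 1 ∧ y ≠ z ∧
      IsSquare y ∧ IsSquare z ∧ IsSquare (y - 1) ∧ IsSquare (z - 1) ∧ IsSquare (z - y) := by
    decide
  have : Fact (Nat.Prime 17) := ⟨by norm_num⟩
  exact fun h ↦ no_square_differences (h.exists_isSquare_sub hij)

end Paley

theorem blowup_K17 (k s n : ℕ) (hk : 1 ≤ k) (hs : s ≤ k) (hn : 1 ≤ n)
    (h : ∃ c : Fin n → Fin n → ℕ, IsSym c ∧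
      (∀ u v : Fin n, u ≠ v → c u v ∈ Finset.Icc 1 k) ∧
      NoRainbowTriangle c ∧
      (∀ i ∈ Finset.Icc 1 s, ¬ HasMonoK4plus c i) ∧
      (∀ i ∈ Finset.Icc (s + 1) k, ¬ HasMonoK3 c i)) :
    ∃ c : Fin (17 * n) → Fin (17 * n) → ℕ, IsSym c ∧
      (∀ u v : Fin (17 * n), u ≠ v → c u v ∈ Finset.Icc 1 (k + 2)) ∧
      NoRainbowTriangle c ∧
      (∀ i ∈ (Finset.Icc 1 s ∪ {k + 1, k + 2} : Finset ℕ), ¬ HasMonoK4plus c i) ∧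
      (∀ i ∈ (Finset.Icc (s + 1) k : Finset ℕ), ¬ HasMonoK3 c i) := by
  obtain ⟨c, c_sym, c_colors, c_gallai, hK4, hK3⟩ := h
  let b : Fin 17 → Fin 17 → ℕ := paleyColoring (ZMod.finEquiv 17).toEquiv (k + 1) (k + 2)
  have b_sym : IsSym b := isSym_paleyColoring _ (by decide)
  have b_eq (u v : Fin 17) : b u v = k + 1 ∨ b u v = k + 2 := paleyColoring_eq_or_eq _ u v
  have b_mem (u v : Fin 17) (_ : u ≠ v) : b u v ∈ Finset.Icc 1 (k + 2) := by grind
  have c_mem (u v : Fin n) (huv : u ≠ v) : c u v ∈ Finset.Icc 1 (k + 2) := by grind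
  have b_ne {i : ℕ} (hi : i ≤ k) (u v : Fin 17) (_ : u ≠ v) : b u v ≠ i := by grind
  have c_ne {i : ℕ} (hi : k < i) (u v : Fin n) (huv : u ≠ v) : c u v ≠ i := by grind
  refine ⟨blowUp b c, b_sym.blowUp c_sym,
    fun u v ↦ blowUp_induction (· ∈ Finset.Icc 1 (k + 2)) b_mem c_mem,
    .blowUp b_sym (.of_two_colors fun u v _ ↦ b_eq u v) c_gallai, fun i hi h ↦ ?_,
    fun i hi h ↦ hK3 i hi (h.of_blowUp (b_ne (Finset.mem_Icc.1 hi).2))⟩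
  obtain hik | hik := le_or_gt i k
  · exact hK4 i (by grind) (h.of_blowUp (b_ne hik))
  · exact not_hasMonoK4_paleyColoring_zmod_seventeen (by simp)
      (h.hasMonoK4.of_blowUp (c_ne hik))
end

section
/- Let k ≥ 1, 0 ≤ s ≤ k, and n ≥ 1 be integers. Suppose there exists a Gallai coloring of the complete graph on n vertices with colors from {1,...,k} containing no monochromatic copy of K4^+ in any color i ∈ {1,...,s} and no monochromatic copy of K3 in any color i ∈ {s+1,...,k}. Then there exists a Gallai coloring of the complete graph on 4n vertices with colors from {1,...,k+1} containing no monochromatic copy of K4^+ in any color i ∈ {1,...,s} ∪ {k+1} and no monochromatic copy of K3 in any color i ∈ {s+1,...,k}. -/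
/-!
Substituting a copy of `c` for each vertex of a `K₄` in the new color `ω` creates `K₄⁺` in `ω` as
soon as `n ≥ 2`. Substituting instead a `K₄` of color `ω` for each vertex of `c` turns every
monochromatic `K₄` of `c` into copies of `K₄⁺` in an old color. A monochromatic `K₄` whose color
contains no `K₄⁺` is however a connected component of its color class; since there are no rainbow
triangles, such components are modules (every outside vertex sees them in one color) and are
pairwise disjoint. The sixteen vertices that blow up such a component of color `i` can therefore
be recolored among themselves with `i` and `ω` only. Because `R(4, 4) > 16`, witnessed by the
Paley graph on `ZMod 17`, this can be done without a monochromatic `K₄`.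
-/

open Finset

local instance : Fact (Nat.Prime 17) := ⟨by norm_num⟩

local notation "χ" => quadraticChar (ZMod 17)

theorem quadraticChar_div_eq_one {F : Type*} [Field F] [Fintype F] [DecidableEq F] {a b : F}
    (hb : b ≠ 0) (h : quadraticChar F a = quadraticChar F b) : quadraticChar F (a / b) = 1 := by
  have hb' : quadraticChar F b ≠ 0 := mt quadraticChar_eq_zero_iff.1 hb
  rw [← mul_left_inj' hb', ← map_mul, div_mul_cancel₀ a hb, h, one_mul]

theorem quadraticChar_zmod17_sub_comm (a b : ZMod 17) : χ (a - b) = χ (b - a) := by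
  rw [← neg_sub, neg_eq_neg_one_mul, map_mul, show χ (-1) = 1 by decide, one_mul]

set_option maxRecDepth 100000 in
theorem quadraticChar_zmod17_sub_ne_one : ∀ b d : ZMod 17, χ b = 1 → χ (b - 1) = 1 →
    χ d = 1 → χ (d - 1) = 1 → χ (d - b) ≠ 1 := by
  decide

theorem not_pairwise_quadraticChar_zmod17_sub_eq {T : Finset (ZMod 17)} (hT : 3 < #T) (t : ℤ) :
    ¬ (T : Set (ZMod 17)).Pairwise fun x y => χ (x - y) = t := by
  intro hmono
  obtain ⟨x, a, b, d, hx, ha, hb, hd, hxa, hxb, hxd, hab, had, hbd⟩ :=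
    three_lt_card_iff.1 hT
  -- The affine map sending `x` to `0` and `a` to `1` turns all six differences into squares.
  have hax : a - x ≠ 0 := sub_ne_zero.2 hxa.symm
  have hdiv {y z : ZMod 17} (hy : y ∈ T) (hz : z ∈ T) (hyz : z ≠ y) :
      χ ((y - z) / (a - x)) = 1 :=
    quadraticChar_div_eq_one hax
      ((hmono hy hz hyz.symm).trans (hmono ha hx hxa.symm).symm)
  refine quadraticChar_zmod17_sub_ne_one ((b - x) / (a - x)) ((d - x) / (a - x))
    (hdiv hb hx hxb) ?_ (hdiv hd hx hxd) ?_ ?_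
  · rw [div_sub_one hax, sub_sub_sub_cancel_right]
    exact hdiv hb ha hab
  · rw [div_sub_one hax, sub_sub_sub_cancel_right]
    exact hdiv hd ha had
  · rw [← sub_div, sub_sub_sub_cancel_right]
    exact hdiv hd hb hbd

theorem exists_injOn_fibers {V β L : Type*} [Fintype V] [Fintype L] [DecidableEq β]
    (g : V → β) (hg : ∀ b, #{x | g x = b} ≤ Fintype.card L) :
    ∃ f : V → L, ∀ x y, g x = g y → f x = f y → x = y := by
  have hemb (b : β) : Nonempty ({x // g x = b} ↪ L) :=
    Function.Embedding.nonempty_of_card_le (by simpa [Fintype.card_subtype] using hg b)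
  let e (b : β) := (hemb b).some
  refine ⟨fun x => e (g x) ⟨x, rfl⟩, fun x y hxy hf => ?_⟩
  have he (b : β) (hb : g x = b) : e (g x) ⟨x, rfl⟩ = e b ⟨x, hb⟩ := by subst hb; rfl
  exact congrArg Subtype.val ((e (g y)).injective ((he _ hxy).symm.trans hf))

section Blocks

variable {n : ℕ} {α : Type*} {c : Fin n → Fin n → α} {i j ω : α} {S T : Finset (Fin n)}
  {u v w x y : Fin n}

/-- `S` spans a monochromatic `K₄` in color `i`. -/
structure IsMonoK4 (c : Fin n → Fin n → α) (i : α) (S : Finset (Fin n)) : Prop where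
  card_eq : #S = 4
  color_eq : ∀ ⦃x⦄, x ∈ S → ∀ ⦃y⦄, y ∈ S → x ≠ y → c x y = i

/-- `S` spans a monochromatic `K₄` in color `i` that is a connected component of the graph of
color `i`. -/
structure IsIsolatedK4 (c : Fin n → Fin n → α) (i : α) (S : Finset (Fin n)) : Prop
    extends IsMonoK4 c i S where
  color_ne : ∀ x ∈ S, ∀ v ∉ S, c x v ≠ i

theorem hasMonoK4plus_iff_exists_isMonoK4 (hsym : IsSym c) :
    HasMonoK4plus c i ↔ ∃ S, IsMonoK4 c i S ∧ ∃ x ∈ S, ∃ v ∉ S, c x v = i := by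
  constructor
  · rintro ⟨x, a, b, d, e, hxa, hxb, hxd, hxe, hab, had, hae, hbd, hbe, hde,
      cxa, cxb, cxd, cxe, cab, cad, cbd⟩
    refine ⟨{x, a, b, d}, ⟨by grind, ?_⟩, x, by simp, e, by grind, cxe⟩
    intro y hy z hz hyz
    have := hsym y z
    grind
  · rintro ⟨S, hS, x, hx, e, he, hxe⟩
    obtain ⟨a, b, d, hab, had, hbd, hSx⟩ :=
      card_eq_three.1 (show #(S.erase x) = 3 by rw [card_erase_of_mem hx, hS.card_eq])
    have hmem : ∀ y, y ∈ S.erase x ↔ y = a ∨ y = b ∨ y = d := by simp [hSx]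
    have hcol := hS.color_eq
    simp only [mem_erase] at hmem
    refine ⟨x, a, b, d, e, ?_⟩
    grind

theorem IsMonoK4.isIsolatedK4 (hsym : IsSym c) (hS : IsMonoK4 c i S) (hi : ¬ HasMonoK4plus c i) :
    IsIsolatedK4 c i S :=
  ⟨hS, fun x hx v hv hxv =>
    hi ((hasMonoK4plus_iff_exists_isMonoK4 hsym).2 ⟨S, hS, x, hx, v, hv, hxv⟩)⟩

theorem IsMonoK4.hasMonoK3 (hS : IsMonoK4 c i S) : HasMonoK3 c i := by
  obtain ⟨x, hx, y, hy, z, hz, hxy, hxz, hyz⟩ := two_lt_card.1 (show 2 < #S by simp [hS.card_eq])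
  exact ⟨x, y, z, hxy, hxz, hyz, hS.color_eq hx hy hxy, hS.color_eq hx hz hxz,
    hS.color_eq hy hz hyz⟩

theorem IsMonoK4.exists_ne (hS : IsMonoK4 c i S) (u : Fin n) : ∃ v ∈ S, v ≠ u :=
  exists_mem_ne (by simp [hS.card_eq]) u

theorem IsIsolatedK4.color_congr (hg : NoRainbowTriangle c) (hS : IsIsolatedK4 c i S)
    (hx : x ∈ S) (hy : y ∈ S) (hv : v ∉ S) : c x v = c y v := by
  obtain rfl | hxy := eq_or_ne x y
  · rfl
  have hcol := hS.color_eq hx hy hxy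
  rcases hg x y v hxy (ne_of_mem_of_not_mem hx hv) (ne_of_mem_of_not_mem hy hv) with h | h | h
  · exact absurd (h.symm.trans hcol) (hS.color_ne x hx v hv)
  · exact absurd (h.symm.trans hcol) (hS.color_ne y hy v hv)
  · exact h

theorem IsIsolatedK4.color_unique (hsym : IsSym c) (hg : NoRainbowTriangle c)
    (hS : IsIsolatedK4 c i S) (hT : IsIsolatedK4 c j T) (huS : u ∈ S) (huT : u ∈ T) : i = j := by
  by_contra hij
  obtain ⟨x, hxS, hxu⟩ := hS.exists_ne u
  obtain ⟨y, hyT, hyu⟩ := hT.exists_ne u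
  have hux : c u x = i := hS.color_eq huS hxS hxu.symm
  have huy : c u y = j := hT.color_eq huT hyT hyu.symm
  have hxT : x ∉ T := fun hxT => hij (hux.symm.trans (hT.color_eq huT hxT hxu.symm))
  have hyS : y ∉ S := fun hyS => hij ((hS.color_eq huS hyS hyu.symm).symm.trans huy)
  -- As `S` is a module, `x y` has the color `j` of `u y`, so `x` belongs to the component `T`.
  have hxy : c x y = j := (hS.color_congr hg hxS huS hyS).trans huy
  exact hT.color_ne y hyT x hxT ((hsym y x).trans hxy)

theorem IsMonoK4.subset_of_isIsolatedK4 (hS : IsMonoK4 c i S) (hT : IsIsolatedK4 c i T)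
    (huS : u ∈ S) (huT : u ∈ T) : S ⊆ T := by
  intro v hv
  by_contra hvT
  exact hT.color_ne u huT v hvT (hS.color_eq huS hv (ne_of_mem_of_not_mem huT hvT))

open Classical in
/-- The block of a vertex `u` in the partition of the vertices into isolated monochromatic `K₄`s and
singletons, paired with its color. A singleton block gets the dummy color `ω`, meant to be a color
that does not occur on the edges. -/
noncomputable def block (c : Fin n → Fin n → α) (ω : α) (u : Fin n) : α × Finset (Fin n) :=
  if h : ∃ B : α × Finset (Fin n), IsIsolatedK4 c B.1 B.2 ∧ u ∈ B.2 then h.choose else (ω, {u})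

theorem isIsolatedK4_block_or_eq_singleton (c : Fin n → Fin n → α) (ω : α) (u : Fin n) :
    IsIsolatedK4 c (block c ω u).1 (block c ω u).2 ∨ block c ω u = (ω, {u}) := by
  unfold block
  split_ifs with h
  · exact Or.inl h.choose_spec.1
  · exact Or.inr rfl

theorem mem_block (c : Fin n → Fin n → α) (ω : α) (u : Fin n) : u ∈ (block c ω u).2 := by
  unfold block
  split_ifs with h
  · exact h.choose_spec.2
  · exact mem_singleton_self u

theorem card_block_le (c : Fin n → Fin n → α) (ω : α) (u : Fin n) : #(block c ω u).2 ≤ 4 := by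
  obtain h | h := isIsolatedK4_block_or_eq_singleton c ω u
  · exact h.card_eq.le
  · simp [h]

theorem IsIsolatedK4.block_eq (hsym : IsSym c) (hg : NoRainbowTriangle c)
    (hS : IsIsolatedK4 c i S) (hu : u ∈ S) : block c ω u = (i, S) := by
  have hex : ∃ B : α × Finset (Fin n), IsIsolatedK4 c B.1 B.2 ∧ u ∈ B.2 := ⟨(i, S), hS, hu⟩
  rw [block, dif_pos hex]
  obtain ⟨hB, huB⟩ := hex.choose_spec
  have hcolor := hB.color_unique hsym hg hS huB hu
  rw [hcolor] at hB
  exact Prod.ext hcolor ((hB.subset_of_isIsolatedK4 hS huB hu).antisymm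
    (hS.subset_of_isIsolatedK4 hB hu huB))

theorem block_eq_block_iff (hsym : IsSym c) (hg : NoRainbowTriangle c) :
    block c ω u = block c ω v ↔ v ∈ (block c ω u).2 := by
  refine ⟨fun h => h ▸ mem_block c ω v, fun hv => ?_⟩
  obtain hK4 | hsing := isIsolatedK4_block_or_eq_singleton c ω u
  · exact (hK4.block_eq hsym hg hv).symm
  · rw [hsing, mem_singleton] at hv
    rw [hv]

theorem color_eq_of_block_eq (h : block c ω u = block c ω v) (huv : u ≠ v) :
    c u v = (block c ω u).1 := by
  have hv : v ∈ (block c ω u).2 := h ▸ mem_block c ω v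
  obtain hK4 | hsing := isIsolatedK4_block_or_eq_singleton c ω u
  · exact hK4.color_eq (mem_block c ω u) hv huv
  · rw [hsing, mem_singleton] at hv
    exact absurd hv.symm huv

theorem color_ne_of_block_ne (hsym : IsSym c) (hg : NoRainbowTriangle c)
    (hω : ∀ u v, u ≠ v → c u v ≠ ω) (h : block c ω u ≠ block c ω v) :
    c u v ≠ (block c ω u).1 := by
  obtain hK4 | hsing := isIsolatedK4_block_or_eq_singleton c ω u
  · exact hK4.color_ne u (mem_block c ω u) v (mt (block_eq_block_iff hsym hg).2 h)
  · rw [hsing]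
    exact hω u v (ne_of_apply_ne _ h)

theorem color_congr_of_block_eq (hsym : IsSym c) (hg : NoRainbowTriangle c)
    (huv : block c ω u = block c ω v) (huw : block c ω u ≠ block c ω w) : c u w = c v w := by
  have hv : v ∈ (block c ω u).2 := huv ▸ mem_block c ω v
  obtain hK4 | hsing := isIsolatedK4_block_or_eq_singleton c ω u
  · exact hK4.color_congr hg (mem_block c ω u) hv (mt (block_eq_block_iff hsym hg).2 huw)
  · rw [hsing, mem_singleton] at hv
    rw [hv]

theorem block_fst_mem_insert {K : Set α} (hK : ∀ u v, u ≠ v → c u v ∈ K) (u : Fin n) :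
    (block c ω u).1 ∈ insert ω K := by
  obtain hK4 | hsing := isIsolatedK4_block_or_eq_singleton c ω u
  · obtain ⟨v, hv, hvu⟩ := hK4.exists_ne u
    rw [← hK4.color_eq (mem_block c ω u) hv hvu.symm]
    exact Set.mem_insert_of_mem ω (hK u v hvu.symm)
  · simp [hsing]

end Blocks

section Blowup

variable {m n : ℕ} {α : Type*} {c : Fin n → Fin n → α} {i ω : α} {p : Fin m → Fin n}
  {ℓ : Fin m → ZMod 17} {x y : Fin m} {S : Finset (Fin m)}

open Classical in
/-- The coloring that blows up `c` along `p`, the fiber of `p` over a vertex being the set of its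
copies. Between copies of vertices in different blocks it is `c`; between copies of vertices in one
block it is the Paley coloring of the labels `ℓ`, with the color of the block on the differences
that are nonzero squares and the new color `ω` on all others. -/
noncomputable def blowup (c : Fin n → Fin n → α) (ω : α) (p : Fin m → Fin n)
    (ℓ : Fin m → ZMod 17) (x y : Fin m) : α :=
  if block c ω (p x) = block c ω (p y) then
    if χ (ℓ x - ℓ y) = 1 then (block c ω (p x)).1 else ω
  else c (p x) (p y)

theorem blowup_of_block_ne (h : block c ω (p x) ≠ block c ω (p y)) :
    blowup c ω p ℓ x y = c (p x) (p y) :=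
  if_neg h

theorem blowup_of_block_eq (h : block c ω (p x) = block c ω (p y)) :
    blowup c ω p ℓ x y =
      if χ (ℓ x - ℓ y) = 1 then (block c ω (p x)).1 else ω :=
  if_pos h

theorem blowup_eq_or_eq_of_block_eq (h : block c ω (p x) = block c ω (p y)) :
    blowup c ω p ℓ x y = (block c ω (p x)).1 ∨ blowup c ω p ℓ x y = ω := by
  rw [blowup_of_block_eq h]
  exact ite_eq_or_eq _ _ _

theorem isSym_blowup (hsym : IsSym c) : IsSym (blowup c ω p ℓ) := by
  intro x y
  by_cases h : block c ω (p x) = block c ω (p y)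
  · rw [blowup_of_block_eq h, blowup_of_block_eq h.symm, h, quadraticChar_zmod17_sub_comm]
  · rw [blowup_of_block_ne h, blowup_of_block_ne (Ne.symm h), hsym]

theorem blowup_mem_insert {K : Set α} (hK : ∀ u v, u ≠ v → c u v ∈ K) (x y : Fin m) :
    blowup c ω p ℓ x y ∈ insert ω K := by
  by_cases h : block c ω (p x) = block c ω (p y)
  · obtain h' | h' := blowup_eq_or_eq_of_block_eq (ℓ := ℓ) h <;> rw [h']
    · exact block_fst_mem_insert hK (p x)
    · exact Set.mem_insert ω K
  · rw [blowup_of_block_ne h]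
    exact Set.mem_insert_of_mem ω (hK _ _ (ne_of_apply_ne _ h))

theorem blowup_congr_of_block_eq (hsym : IsSym c) (hg : NoRainbowTriangle c) {z : Fin m}
    (hxy : block c ω (p x) = block c ω (p y)) (hxz : block c ω (p x) ≠ block c ω (p z)) :
    blowup c ω p ℓ x z = blowup c ω p ℓ y z := by
  rw [blowup_of_block_ne hxz, blowup_of_block_ne (hxy ▸ hxz)]
  exact color_congr_of_block_eq hsym hg hxy hxz

theorem noRainbowTriangle_blowup (hsym : IsSym c) (hg : NoRainbowTriangle c) :
    NoRainbowTriangle (blowup c ω p ℓ) := by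
  intro x y z _ _ _
  have hsym' := isSym_blowup (ω := ω) (p := p) (ℓ := ℓ) hsym
  by_cases hxy : block c ω (p x) = block c ω (p y)
  · by_cases hxz : block c ω (p x) = block c ω (p z)
    · have h₁ := blowup_eq_or_eq_of_block_eq (ℓ := ℓ) hxy
      have h₂ := blowup_eq_or_eq_of_block_eq (ℓ := ℓ) hxz
      have h₃ := blowup_eq_or_eq_of_block_eq (ℓ := ℓ) (hxy.symm.trans hxz)
      rw [← hxy] at h₃
      grind
    · exact Or.inr (Or.inr (blowup_congr_of_block_eq hsym hg hxy hxz))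
  by_cases hxz : block c ω (p x) = block c ω (p z)
  · rw [hsym' y z]
    exact Or.inr (Or.inl (blowup_congr_of_block_eq hsym hg hxz hxy))
  by_cases hyz : block c ω (p y) = block c ω (p z)
  · rw [hsym' x y, hsym' x z]
    exact Or.inl (blowup_congr_of_block_eq hsym hg hyz (Ne.symm hxy))
  rw [blowup_of_block_ne hxy, blowup_of_block_ne hxz, blowup_of_block_ne hyz]
  exact hg _ _ _ (ne_of_apply_ne _ hxy) (ne_of_apply_ne _ hxz) (ne_of_apply_ne _ hyz)

theorem not_isMonoK4_blowup_of_block_eq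
    (hℓ : ∀ x y, block c ω (p x) = block c ω (p y) → ℓ x = ℓ y → x = y)
    {B : α × Finset (Fin n)} (hB : B.1 ≠ ω) (hS : ∀ x ∈ S, block c ω (p x) = B) :
    ¬ IsMonoK4 (blowup c ω p ℓ) i S := by
  classical
  intro hmono
  have hinj : Set.InjOn ℓ S := fun x hx y hy => hℓ x y ((hS x hx).trans (hS y hy).symm)
  refine not_pairwise_quadraticChar_zmod17_sub_eq
    ((card_image_of_injOn hinj).trans hmono.card_eq).ge (if i = B.1 then 1 else -1) ?_
  rw [coe_image, hinj.pairwise_image]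
  intro x hx y hy hxy
  have hcol := hmono.color_eq hx hy hxy
  have hne : ℓ x - ℓ y ≠ 0 := sub_ne_zero.2 (hinj.ne hx hy hxy)
  rw [blowup_of_block_eq ((hS x hx).trans (hS y hy).symm), hS x hx] at hcol
  have hdich := quadraticChar_dichotomy hne
  change χ (ℓ x - ℓ y) = _
  grind

theorem IsMonoK4.pairwise_block_ne_of_blowup (hsym : IsSym c) (hg : NoRainbowTriangle c)
    (hω : ∀ u v, u ≠ v → c u v ≠ ω)
    (hℓ : ∀ x y, block c ω (p x) = block c ω (p y) → ℓ x = ℓ y → x = y)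
    (hS : IsMonoK4 (blowup c ω p ℓ) i S) (hi : i ≠ ω) :
    (S : Set (Fin m)).Pairwise fun x y => block c ω (p x) ≠ block c ω (p y) := by
  intro x hx y hy hxy hblock
  have hcolor : (block c ω (p x)).1 = i := by
    obtain h | h := blowup_eq_or_eq_of_block_eq (ℓ := ℓ) hblock
    · rw [← h, hS.color_eq hx hy hxy]
    · exact absurd ((hS.color_eq hx hy hxy).symm.trans h) hi
  -- No edge of color `i` leaves the block, so it contains the copies of all of `S`.
  have hall : ∀ z ∈ S, block c ω (p z) = block c ω (p x) := by
    intro z hz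
    obtain rfl | hxz := eq_or_ne x z
    · rfl
    by_contra hne
    have hcol := hS.color_eq hx hz hxz
    rw [blowup_of_block_ne (Ne.symm hne), ← hcolor] at hcol
    exact color_ne_of_block_ne hsym hg hω (Ne.symm hne) hcol
  exact not_isMonoK4_blowup_of_block_eq hℓ (hcolor ▸ hi) hall hS

theorem IsMonoK4.image_of_blowup (hS : IsMonoK4 (blowup c ω p ℓ) i S)
    (hdist : (S : Set (Fin m)).Pairwise fun x y => block c ω (p x) ≠ block c ω (p y)) :
    IsMonoK4 c i (S.image p) := by
  have hinj : Set.InjOn p S := fun x hx y hy hxy =>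
    by_contra fun hne => hdist hx hy hne (by rw [hxy])
  refine ⟨by rw [card_image_of_injOn hinj, hS.card_eq], ?_⟩
  simp only [forall_mem_image]
  intro x hx y hy hxy
  have hne : x ≠ y := ne_of_apply_ne p hxy
  rw [← blowup_of_block_ne (hdist hx hy hne)]
  exact hS.color_eq hx hy hne

theorem IsMonoK4.hasMonoK4plus_of_blowup (hsym : IsSym c) (hg : NoRainbowTriangle c)
    (hω : ∀ u v, u ≠ v → c u v ≠ ω)
    (hℓ : ∀ x y, block c ω (p x) = block c ω (p y) → ℓ x = ℓ y → x = y)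
    (hS : IsMonoK4 (blowup c ω p ℓ) i S) (hi : i ≠ ω) : HasMonoK4plus c i := by
  by_contra hplus
  have hdist := hS.pairwise_block_ne_of_blowup hsym hg hω hℓ hi
  have hblock {x : Fin m} (hx : x ∈ S) : block c ω (p x) = (i, S.image p) :=
    ((hS.image_of_blowup hdist).isIsolatedK4 hsym hplus).block_eq hsym hg (mem_image_of_mem p hx)
  obtain ⟨x, hx, y, hy, hxy⟩ := one_lt_card.1 (show 1 < #S by simp [hS.card_eq])
  exact hdist hx hy hxy ((hblock hx).trans (hblock hy).symm)

theorem block_eq_of_blowup_eq (hω : ∀ u v, u ≠ v → c u v ≠ ω) (h : blowup c ω p ℓ x y = ω) :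
    block c ω (p x) = block c ω (p y) := by
  by_contra hne
  rw [blowup_of_block_ne hne] at h
  exact hω _ _ (ne_of_apply_ne _ hne) h

theorem not_hasMonoK4plus_blowup_self (hsym : IsSym c) (hω : ∀ u v, u ≠ v → c u v ≠ ω)
    (hp : ∀ u, #{x | p x = u} ≤ 4)
    (hℓ : ∀ x y, block c ω (p x) = block c ω (p y) → ℓ x = ℓ y → x = y) :
    ¬ HasMonoK4plus (blowup c ω p ℓ) ω := by
  rw [hasMonoK4plus_iff_exists_isMonoK4 (isSym_blowup hsym)]
  rintro ⟨S, hS, x, hx, e, he, hxe⟩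
  have hblock : ∀ y ∈ insert e S, block c ω (p y) = block c ω (p x) := by
    intro y hy
    obtain rfl | hy := mem_insert.1 hy
    · exact (block_eq_of_blowup_eq hω hxe).symm
    obtain rfl | hyx := eq_or_ne y x
    · rfl
    · exact block_eq_of_blowup_eq hω (hS.color_eq hy hx hyx)
  obtain hK4 | hsing := isIsolatedK4_block_or_eq_singleton c ω (p x)
  · obtain ⟨v, hv, hvx⟩ := hK4.exists_ne (p x)
    have hcolor : (block c ω (p x)).1 ≠ ω :=
      hK4.color_eq hv (mem_block c ω (p x)) hvx ▸ hω v (p x) hvx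
    exact not_isMonoK4_blowup_of_block_eq hℓ hcolor
      (fun y hy => hblock y (mem_insert_of_mem hy)) hS
  · have hsub : insert e S ⊆ ({y | p y = p x} : Finset (Fin m)) := by
      intro y hy
      have hmem := mem_block c ω (p y)
      rw [hblock y hy, hsing, mem_singleton] at hmem
      exact (mem_filter_univ y).2 hmem
    have hle := (card_le_card hsub).trans (hp (p x))
    rw [card_insert_of_notMem he, hS.card_eq] at hle
    omega

theorem hasMonoK3_of_hasMonoK3_blowup (hi : i ≠ ω) (h : HasMonoK3 (blowup c ω p ℓ) i) :
    HasMonoK3 c i := by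
  have hK3 {x y : Fin m} (hxy : block c ω (p x) = block c ω (p y))
      (hcol : blowup c ω p ℓ x y = i) : HasMonoK3 c i := by
    obtain h | h := blowup_eq_or_eq_of_block_eq (ℓ := ℓ) hxy
    · obtain hK4 | hsing := isIsolatedK4_block_or_eq_singleton c ω (p x)
      · rw [← hcol, h]
        exact hK4.hasMonoK3
      · rw [hsing] at h
        exact absurd (hcol.symm.trans h) hi
    · exact absurd (hcol.symm.trans h) hi
  obtain ⟨x, y, z, -, -, -, hxy, hxz, hyz⟩ := h
  by_cases bxy : block c ω (p x) = block c ω (p y)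
  · exact hK3 bxy hxy
  by_cases bxz : block c ω (p x) = block c ω (p z)
  · exact hK3 bxz hxz
  by_cases byz : block c ω (p y) = block c ω (p z)
  · exact hK3 byz hyz
  rw [blowup_of_block_ne bxy] at hxy
  rw [blowup_of_block_ne bxz] at hxz
  rw [blowup_of_block_ne byz] at hyz
  exact ⟨p x, p y, p z, ne_of_apply_ne _ bxy, ne_of_apply_ne _ bxz, ne_of_apply_ne _ byz,
    hxy, hxz, hyz⟩

theorem exists_label (hp : ∀ u, #{x | p x = u} ≤ 4) (c : Fin n → Fin n → α) (ω : α) :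
    ∃ ℓ : Fin m → ZMod 17, ∀ x y, block c ω (p x) = block c ω (p y) → ℓ x = ℓ y → x = y := by
  classical
  refine exists_injOn_fibers (fun x => block c ω (p x)) fun B => ?_
  obtain hempty | ⟨x, hx⟩ := ({x | block c ω (p x) = B} : Finset (Fin m)).eq_empty_or_nonempty
  · simp [hempty]
  obtain rfl : block c ω (p x) = B := by simpa using hx
  calc #{y | block c ω (p y) = block c ω (p x)}
      ≤ 4 * #(block c ω (p x)).2 := card_le_mul_card_image_of_maps_to (f := p)
        (fun y hy => by rw [← (mem_filter_univ y).1 hy]; exact mem_block c ω (p y)) 4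
        fun u _ => (card_le_card (filter_subset_filter _ (subset_univ _))).trans (hp u)
    _ ≤ 4 * 4 := by gcongr; exact card_block_le c ω (p x)
    _ ≤ Fintype.card (ZMod 17) := by rw [ZMod.card]; norm_num

end Blowup

theorem card_filter_modNat_eq_le (m n : ℕ) (u : Fin n) : #{x : Fin (m * n) | x.modNat = u} ≤ m :=
  calc #{x : Fin (m * n) | x.modNat = u}
      ≤ #(univ : Finset (Fin m)) :=
        card_le_card_of_injOn Fin.divNat (fun _ _ => mem_univ _) fun x hx y hy hxy =>
          finProdFinEquiv.symm.injective (Prod.ext hxy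
            (((mem_filter_univ x).1 hx).trans ((mem_filter_univ y).1 hy).symm))
    _ = m := card_fin m

theorem blowup_K4_general {n : ℕ} {α : Type*} {K : Set α} {ω : α} (hω : ω ∉ K)
    (c : Fin n → Fin n → α) (hsym : IsSym c) (hK : ∀ u v, u ≠ v → c u v ∈ K)
    (hg : NoRainbowTriangle c) :
    ∃ c' : Fin (4 * n) → Fin (4 * n) → α, IsSym c' ∧ (∀ x y, x ≠ y → c' x y ∈ insert ω K) ∧
      NoRainbowTriangle c' ∧
      (∀ i, HasMonoK4plus c' i → i ≠ ω ∧ HasMonoK4plus c i) ∧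
      (∀ i ≠ ω, HasMonoK3 c' i → HasMonoK3 c i) := by
  have hω' : ∀ u v, u ≠ v → c u v ≠ ω := fun u v huv => ne_of_mem_of_not_mem (hK u v huv) hω
  have hp := card_filter_modNat_eq_le 4 n
  obtain ⟨ℓ, hℓ⟩ := exists_label hp c ω
  have hsym' := isSym_blowup (ω := ω) (p := Fin.modNat (m := 4)) (ℓ := ℓ) hsym
  refine ⟨blowup c ω Fin.modNat ℓ, hsym', fun x y _ => blowup_mem_insert hK x y,
    noRainbowTriangle_blowup hsym hg, fun i h => ?_, fun i hi => hasMonoK3_of_hasMonoK3_blowup hi⟩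
  have hi : i ≠ ω := by
    rintro rfl
    exact not_hasMonoK4plus_blowup_self hsym hω' hp hℓ h
  obtain ⟨S, hS, -⟩ := (hasMonoK4plus_iff_exists_isMonoK4 hsym').1 h
  exact ⟨hi, hS.hasMonoK4plus_of_blowup hsym hg hω' hℓ hi⟩

theorem blowup_K4 (k s n : ℕ) (hk : 1 ≤ k) (hs : s ≤ k) (hn : 1 ≤ n)
    (h : ∃ c : Fin n → Fin n → ℕ, IsSym c ∧
      (∀ u v : Fin n, u ≠ v → c u v ∈ Finset.Icc 1 k) ∧
      NoRainbowTriangle c ∧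
      (∀ i ∈ Finset.Icc 1 s, ¬ HasMonoK4plus c i) ∧
      (∀ i ∈ Finset.Icc (s + 1) k, ¬ HasMonoK3 c i)) :
    ∃ c : Fin (4 * n) → Fin (4 * n) → ℕ, IsSym c ∧
      (∀ u v : Fin (4 * n), u ≠ v → c u v ∈ Finset.Icc 1 (k + 1)) ∧
      NoRainbowTriangle c ∧
      (∀ i ∈ (Finset.Icc 1 s ∪ {k + 1} : Finset ℕ), ¬ HasMonoK4plus c i) ∧
      (∀ i ∈ (Finset.Icc (s + 1) k : Finset ℕ), ¬ HasMonoK3 c i) := by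
  obtain ⟨c, hsym, hcol, hg, hK4, hK3⟩ := h
  obtain ⟨c', hsym', hcol', hg', hK4', hK3'⟩ :=
    blowup_K4_general (K := Set.Icc 1 k) (ω := k + 1) (by simp) c hsym (by simpa using hcol) hg
  exact ⟨c', hsym', by grind, hg', by grind, by grind⟩
end
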